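/- arXiv:1802.10560 — 4 statements merged into one kernel-verified Lean document; each statement's English description precedes it below -/
import Mathlib

section
/- Let (X, 𝒜, μ) be a measure space with μ σ-finite, and let p, q : X → ℝ be measurable functions with p ≥ 0, q ≥ 0, ∫ p dμ = 1 and ∫ q dμ = 1. For every measurable function D : X → ℝ with 0 < D(x) < 1 for all x, one has ∫ (p(x)·log D(x) + q(x)·log(1−D(x))) dμ(x) ≤ ∫_{ {x : p(x)+q(x) > 0} } (p(x)·log(p(x)/(p(x)+q(x))) + q(x)·log(q(x)/(p(x)+q(x)))) dμ(x), where both sides are interpreted as extended-real-valued integrals (the left side may be −∞). -/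
open MeasureTheory Real Set

theorem gan_aux {a s d : ℝ} (ha : 0 ≤ a) (hs : 0 < s) (hd : 0 < d) :
    a * Real.log d ≤ a * Real.log (a / s) + (d * s - a) := by
  rcases ha.eq_or_lt with rfl | ha
  · simp; positivity
  · have h1 := Real.log_le_sub_one_of_pos (x := d / (a / s)) (by positivity)
    rw [Real.log_div hd.ne' (by positivity)] at h1
    have h2 := mul_le_mul_of_nonneg_left h1 ha.le
    have h3 : a * (d / (a / s) - 1) = d * s - a := by field_simp
    linarith

/-- For densities `p, q` w.r.t. a σ-finite measure `μ` and any discriminator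
`D : X → (0,1)`, the objective `∫ (p·log D + q·log(1−D)) dμ` is at most the value attained
by the optimal discriminator `p/(p+q)` on the set `{p+q > 0}`.  Both sides are interpreted
as extended-real-valued integrals (possibly `−∞`): since both integrands are nonpositive,
the inequality is expressed via the `ℝ≥0∞`-valued lower integrals of their negations
(so the direction of the inequality is reversed). -/
theorem gan_optimal_discriminator_upper_bound
    {X : Type*} [MeasurableSpace X] (μ : Measure X) [SigmaFinite μ]
    (p q : X → ℝ) (hpm : Measurable p) (hqm : Measurable q)
    (hp0 : ∀ x, 0 ≤ p x) (hq0 : ∀ x, 0 ≤ q x)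
    (hp1 : ∫ x, p x ∂μ = 1) (hq1 : ∫ x, q x ∂μ = 1)
    (D : X → ℝ) (hDm : Measurable D) (hD : ∀ x, D x ∈ Set.Ioo (0:ℝ) 1) :
    ∫⁻ x in {x | 0 < p x + q x},
        ENNReal.ofReal
          (-(p x * Real.log (p x / (p x + q x)) + q x * Real.log (q x / (p x + q x)))) ∂μ
      ≤ ∫⁻ x, ENNReal.ofReal (-(p x * Real.log (D x) + q x * Real.log (1 - D x))) ∂μ := by
  refine le_trans (setLIntegral_mono' ?_ ?_) (setLIntegral_le_lintegral _ _)
  · exact measurableSet_lt measurable_const (hpm.add hqm)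
  · intro x hx
    have hx' : 0 < p x + q x := hx
    apply ENNReal.ofReal_le_ofReal
    have h1 := gan_aux (hp0 x) hx' (hD x).1
    have h2 := gan_aux (hq0 x) hx' (sub_pos.2 (hD x).2)
    nlinarith
end

section
/- (Proposition 1.) Let X be a measurable space with σ-finite measure μ, let p_data, p_novel : X → ℝ be densities with respect to μ, and assume p_data(x) > 0 for all x ∈ X. Let π ∈ (0,1], set p_g(x) = π·p_novel(x) + (1−π)·p_data(x), and define the optimal discriminator D*(x) = p_data(x)/(p_data(x)+p_g(x)). Fix c ∈ (0,1), let φ* be the indicator function of {x : D*(x) < c}, and let α = ∫ φ*·p_data dμ. Then for every measurable function φ : X → [0,1] with ∫ φ·p_data dμ ≤ α, one has ∫ φ·p_novel dμ ≤ ∫ φ*·p_novel dμ. That is, the test that declares x novel when D*(x) < c is a most powerful test at false positive rate α for detecting p_novel against p_data. -/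
open MeasureTheory Real Set

/-- Proposition 1 of the paper: when the mixture generator's other component is the novel
density, i.e. `p_g = π·p_novel + (1−π)·p_data`, the test declaring `x` novel when the
optimal discriminator `D*(x) = p_data(x)/(p_data(x)+p_g(x))` is below `c` is a most
powerful test, at its own false positive rate, for detecting `p_novel` against `p_data`. -/
theorem optimal_discriminator_is_optimal_novelty_detector
    {X : Type*} [MeasurableSpace X] (μ : Measure X) [SigmaFinite μ]
    (pdata pnovel : X → ℝ) (hdm : Measurable pdata) (hnm : Measurable pnovel)
    (hd0 : ∀ x, 0 < pdata x) (hn0 : ∀ x, 0 ≤ pnovel x)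
    (hd1 : ∫ x, pdata x ∂μ = 1) (hn1 : ∫ x, pnovel x ∂μ = 1)
    (pi : ℝ) (hpi : pi ∈ Set.Ioc (0:ℝ) 1)
    (pg : X → ℝ) (hpg : ∀ x, pg x = pi * pnovel x + (1 - pi) * pdata x)
    (Dstar : X → ℝ) (hD : ∀ x, Dstar x = pdata x / (pdata x + pg x))
    (c : ℝ) (hc : c ∈ Set.Ioo (0:ℝ) 1)
    (φstar : X → ℝ) (hφstar : φstar = Set.indicator {x | Dstar x < c} (fun _ => (1:ℝ)))
    (α : ℝ) (hα : α = ∫ x, φstar x * pdata x ∂μ)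
    (φ : X → ℝ) (hφm : Measurable φ) (hφ01 : ∀ x, φ x ∈ Set.Icc (0:ℝ) 1)
    (hφfpr : ∫ x, φ x * pdata x ∂μ ≤ α) :
    ∫ x, φ x * pnovel x ∂μ ≤ ∫ x, φstar x * pnovel x ∂μ := by
  obtain ⟨hp0, hp1⟩ := hpi
  obtain ⟨hc0, hc1⟩ := hc
  have hdi : Integrable pdata μ := by
    by_contra h
    rw [integral_undef h] at hd1
    exact zero_ne_one hd1
  have hni : Integrable pnovel μ := by
    by_contra h
    rw [integral_undef h] at hn1
    exact zero_ne_one hn1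
  have hDm : Measurable Dstar := by
    have h1 : Dstar = fun x => pdata x / (pdata x + (pi * pnovel x + (1 - pi) * pdata x)) := by
      funext x
      rw [hD, hpg]
    rw [h1]
    fun_prop
  have hsm : Measurable φstar := by
    rw [hφstar]
    exact measurable_const.indicator (measurableSet_lt hDm measurable_const)
  have hs01 : ∀ x, φstar x ∈ Set.Icc (0:ℝ) 1 := by
    intro x
    rw [hφstar]
    by_cases h : x ∈ {x | Dstar x < c}
    · rw [Set.indicator_of_mem h]; simp
    · rw [Set.indicator_of_notMem h]; simp
  have hint : ∀ (f p : X → ℝ), Measurable f → (∀ x, f x ∈ Set.Icc (0:ℝ) 1) → Integrable p μ →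
      Integrable (fun x => f x * p x) μ := by
    intro f p hf hf1 hp
    refine hp.bdd_mul (c := 1) hf.aestronglyMeasurable (Filter.Eventually.of_forall fun x => ?_)
    rw [Real.norm_eq_abs, abs_of_nonneg (hf1 x).1]
    exact (hf1 x).2
  have i1 := hint φ pdata hφm hφ01 hdi
  have i2 := hint φ pnovel hφm hφ01 hni
  have i3 := hint φstar pdata hsm hs01 hdi
  have i4 := hint φstar pnovel hsm hs01 hni
  have key : ∀ x, Dstar x < c ↔ (1 - c - c * (1 - pi)) * pdata x < c * pi * pnovel x := by
    intro x
    have hg : 0 ≤ pg x := by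
      rw [hpg]
      exact add_nonneg (mul_nonneg hp0.le (hn0 x)) (mul_nonneg (by linarith) (hd0 x).le)
    rw [hD, div_lt_iff₀ (by linarith [hd0 x]), hpg]
    constructor <;> intro h <;> nlinarith
  set k := 1 - c - c * (1 - pi) with hk
  have hcp : 0 < c * pi := mul_pos hc0 hp0
  rcases lt_or_ge k 0 with hk0 | hk0
  · refine integral_mono i2 i4 fun x => ?_
    have h : x ∈ {x | Dstar x < c} := (key x).2
      (lt_of_lt_of_le (mul_neg_of_neg_of_pos hk0 (hd0 x)) (mul_nonneg hcp.le (hn0 x)))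
    have h1 : φstar x = 1 := by rw [hφstar, Set.indicator_of_mem h]
    change φ x * pnovel x ≤ φstar x * pnovel x
    rw [h1]
    exact mul_le_mul_of_nonneg_right (hφ01 x).2 (hn0 x)
  · have hpt : ∀ x, k * (φstar x * pdata x) + c * pi * (φ x * pnovel x)
        ≤ k * (φ x * pdata x) + c * pi * (φstar x * pnovel x) := by
      intro x
      have hx := hφ01 x
      by_cases h : x ∈ {x | Dstar x < c}
      · have h1 : φstar x = 1 := by rw [hφstar, Set.indicator_of_mem h]
        have h2 := (key x).1 h
        rw [h1]
        nlinarith [mul_nonneg (sub_nonneg.2 hx.2) (sub_nonneg.2 h2.le)]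
      · have h1 : φstar x = 0 := by rw [hφstar, Set.indicator_of_notMem h]
        have h2 := not_lt.1 (fun h3 => h ((key x).2 h3))
        rw [h1]
        nlinarith [mul_nonneg hx.1 (sub_nonneg.2 h2)]
    have hI := integral_mono ((i3.const_mul k).add (i2.const_mul (c * pi)))
      ((i1.const_mul k).add (i4.const_mul (c * pi))) hpt
    simp only [Pi.add_apply] at hI
    rw [integral_add (i3.const_mul k) (i2.const_mul (c * pi)),
      integral_add (i1.const_mul k) (i4.const_mul (c * pi))] at hI
    simp only [integral_const_mul] at hI
    rw [← hα] at hI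
    have h5 := mul_le_mul_of_nonneg_left hφfpr hk0
    exact le_of_mul_le_mul_left (by linarith) hcp
end

section
/- (Existence of the irreducible mixture decomposition.) Let P and Q be probability measures on a measurable space (Ω, 𝒜) with Q ≠ P. Let S = {β ∈ [0,1] : β·P ≤ Q} (inequality of measures, i.e. β·P(A) ≤ Q(A) for all A ∈ 𝒜) and let β* = sup S. Then: (i) β* ∈ S, i.e. β*·P ≤ Q; (ii) β* < 1; (iii) the measure R defined by R(A) = (Q(A) − β*·P(A))/(1−β*) is a probability measure; (iv) Q = β*·P + (1−β*)·R; and (v) R is irreducible with respect to P, i.e. there is no γ > 0 with γ·P ≤ R. -/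
open MeasureTheory Set ENNReal

/-- Existence of the irreducible mixture decomposition: for probability measures
`Q ≠ P`, with `β* = sup {β ∈ [0,1] : β·P ≤ Q}`, one has `β*·P ≤ Q`, `β* < 1`, and
`R(A) = (Q(A) − β*·P(A))/(1−β*)` defines a probability measure with
`Q = β*·P + (1−β*)·R` which is irreducible with respect to `P`. -/
theorem irreducible_mixture_decomposition_exists
    {Ω : Type*} [MeasurableSpace Ω] (P Q : Measure Ω)
    [IsProbabilityMeasure P] [IsProbabilityMeasure Q] (hne : Q ≠ P)
    (S : Set ℝ≥0∞) (hS : S = {β | β ∈ Set.Icc (0:ℝ≥0∞) 1 ∧ β • P ≤ Q})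
    (βstar : ℝ≥0∞) (hβ : βstar = sSup S) :
    βstar ∈ S ∧ βstar < 1 ∧
      ∃ R : Measure Ω,
        (∀ A : Set Ω, MeasurableSet A → R A = (Q A - βstar * P A) / (1 - βstar)) ∧
        IsProbabilityMeasure R ∧
        Q = βstar • P + (1 - βstar) • R ∧
        ∀ γ : ℝ≥0∞, 0 < γ → ¬ (γ • P ≤ R) := by
  have hle1 : βstar ≤ 1 := by
    rw [hβ]
    refine sSup_le fun b hb => ?_
    rw [hS] at hb
    exact hb.1.2
  have hle : βstar • P ≤ Q := by
    refine Measure.le_iff.2 fun A _ => ?_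
    rw [Measure.smul_apply, smul_eq_mul, hβ, sSup_eq_iSup, ENNReal.iSup_mul]
    refine iSup_le fun b => ?_
    rw [ENNReal.iSup_mul]
    refine iSup_le fun hb => ?_
    rw [hS] at hb
    simpa using hb.2 A
  have hmem : βstar ∈ S := by
    rw [hS]
    exact ⟨⟨zero_le, hle1⟩, hle⟩
  have hlt : βstar < 1 := by
    refine lt_of_le_of_ne hle1 fun h => hne ?_
    rw [h, one_smul] at hle
    refine (Measure.ext fun A hA => le_antisymm ?_ (hle A))
    have h1 := hle Aᶜ
    rw [prob_compl_eq_one_sub hA, prob_compl_eq_one_sub hA] at h1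
    exact (ENNReal.sub_le_sub_iff_left prob_le_one one_ne_top).1 h1
  have hbt : βstar ≠ ∞ := (hlt.trans one_lt_top).ne
  have h0 : 1 - βstar ≠ 0 := (tsub_pos_of_lt hlt).ne'
  have ht : 1 - βstar ≠ ∞ := ENNReal.sub_ne_top one_ne_top
  haveI : IsFiniteMeasure (βstar • P) := Measure.smul_finite P hbt
  have hR : ∀ A : Set Ω, MeasurableSet A →
      ((1 - βstar)⁻¹ • (Q - βstar • P)) A = (Q A - βstar * P A) / (1 - βstar) := by
    intro A hA
    rw [Measure.smul_apply, Measure.sub_apply hA hle, Measure.smul_apply, smul_eq_mul, smul_eq_mul,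
      ENNReal.div_eq_inv_mul]
  have hQ : Q = βstar • P + (1 - βstar) • ((1 - βstar)⁻¹ • (Q - βstar • P)) := by
    rw [smul_smul, ENNReal.mul_inv_cancel h0 ht, one_smul, add_comm,
      Measure.sub_add_cancel_of_le hle]
  refine ⟨hmem, hlt, (1 - βstar)⁻¹ • (Q - βstar • P), hR, ⟨?_⟩, hQ, ?_⟩
  · rw [hR _ MeasurableSet.univ, measure_univ, measure_univ, mul_one, ENNReal.div_self h0 ht]
  · intro γ hγ hγR
    generalize (1 - βstar)⁻¹ • (Q - βstar • P) = R at *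
    have h2 : (βstar + (1 - βstar) * γ) • P ≤ Q := by
      refine Measure.le_iff.2 fun A _ => ?_
      have h3 := hγR A
      rw [hQ]
      simp only [Measure.smul_apply, Measure.add_apply, smul_eq_mul, add_mul, mul_assoc] at h3 ⊢
      gcongr
    have h4 : βstar + (1 - βstar) * γ ∈ S := by
      rw [hS]
      refine ⟨⟨zero_le, ?_⟩, h2⟩
      simpa using h2 univ
    have h5 : βstar + (1 - βstar) * γ ≤ βstar := by
      conv_rhs => rw [hβ]
      exact le_sSup h4
    exact absurd h5 (not_le.2 (ENNReal.lt_add_right hbt (mul_ne_zero h0 hγ.ne')))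
end

section
/- (Uniqueness of the irreducible mixture decomposition.) Let P and Q be probability measures on a measurable space (Ω, 𝒜) with Q ≠ P. Suppose Q = β₁·P + (1−β₁)·R₁ and Q = β₂·P + (1−β₂)·R₂, where β₁, β₂ ∈ [0,1) and R₁, R₂ are probability measures each irreducible with respect to P (i.e. for i = 1,2 there is no γ > 0 with γ·P ≤ R_i). Then β₁ = β₂ and R₁ = R₂. -/
open MeasureTheory Set ENNReal

theorem irr_aux {Ω : Type*} [MeasurableSpace Ω] (P : Measure Ω)
    [IsProbabilityMeasure P]
    (a b : ℝ≥0∞) (ha : a < 1)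
    (R S : Measure Ω)
    (h : a • P + (1 - a) • R = b • P + (1 - b) • S)
    (hirr : ∀ γ : ℝ≥0∞, 0 < γ → ¬ (γ • P ≤ R)) : b ≤ a := by
  by_contra hlt
  push Not at hlt
  refine hirr (b - a) (tsub_pos_of_lt hlt) (Measure.le_iff.2 fun A _ => ?_)
  have hA := congrArg (fun m : Measure Ω => m A) h
  simp only [Measure.add_apply, Measure.smul_apply, smul_eq_mul] at hA ⊢
  have hfin : a * P A ≠ ∞ := ENNReal.mul_ne_top ha.ne_top (measure_ne_top P A)
  have h1 : a * P A + (b - a) * P A ≤ a * P A + (1 - a) * R A := by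
    rw [hA, ← add_mul, add_tsub_cancel_of_le hlt.le]
    exact le_self_add
  calc (b - a) * P A ≤ (1 - a) * R A := (ENNReal.add_le_add_iff_left hfin).1 h1
    _ ≤ 1 * R A := by gcongr; exact tsub_le_self
    _ = R A := one_mul _

/-- Uniqueness of the irreducible mixture decomposition: if `Q ≠ P` and
`Q = βᵢ·P + (1−βᵢ)·Rᵢ` with `βᵢ ∈ [0,1)` and each `Rᵢ` irreducible with respect to `P`
(no `γ > 0` with `γ·P ≤ Rᵢ`), then `β₁ = β₂` and `R₁ = R₂`. -/
theorem irreducible_mixture_decomposition_unique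
    {Ω : Type*} [MeasurableSpace Ω] (P Q : Measure Ω)
    [IsProbabilityMeasure P] [IsProbabilityMeasure Q] (hne : Q ≠ P)
    (β₁ β₂ : ℝ≥0∞) (hβ₁ : β₁ < 1) (hβ₂ : β₂ < 1)
    (R₁ R₂ : Measure Ω) [IsProbabilityMeasure R₁] [IsProbabilityMeasure R₂]
    (h₁ : Q = β₁ • P + (1 - β₁) • R₁)
    (h₂ : Q = β₂ • P + (1 - β₂) • R₂)
    (hirr₁ : ∀ γ : ℝ≥0∞, 0 < γ → ¬ (γ • P ≤ R₁))
    (hirr₂ : ∀ γ : ℝ≥0∞, 0 < γ → ¬ (γ • P ≤ R₂)) :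
    β₁ = β₂ ∧ R₁ = R₂ := by
  have h : β₁ • P + (1 - β₁) • R₁ = β₂ • P + (1 - β₂) • R₂ := h₁.symm.trans h₂
  have hb : β₁ = β₂ := le_antisymm (irr_aux P β₂ β₁ hβ₂ R₂ R₁ h.symm hirr₂)
    (irr_aux P β₁ β₂ hβ₁ R₁ R₂ h hirr₁)
  subst hb
  refine ⟨rfl, Measure.ext fun A _ => ?_⟩
  have hA := congrArg (fun m : Measure Ω => m A) h
  simp only [Measure.add_apply, Measure.smul_apply, smul_eq_mul] at hA
  have hfin : β₁ * P A ≠ ∞ := ENNReal.mul_ne_top hβ₁.ne_top (measure_ne_top P A)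
  have h1 := (ENNReal.add_right_inj hfin).1 hA
  exact (ENNReal.mul_right_inj (tsub_pos_of_lt hβ₁).ne'
    (ne_top_of_le_ne_top ENNReal.one_ne_top tsub_le_self)).1 h1
end
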